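/- For an arbitrary prime power q and integer r ≥ 2, the graph G(q^{r−1}, 1+q+⋯+q^{r−2}) is K_{r,(r−1)!+1}-free; concretely, any r pairwise distinct vertices of this graph have at most (r−1)! common neighbors. -/

import Mathlib

/-- The scaling relation by the subgroup `H ≤ Fˣ` on nonzero pairs of field elements:
`(a₁,b₁) ∼ (a₂,b₂)` iff there is `h ∈ H` with `a₁ = h·a₂` and `b₁ = h·b₂`. -/
def Grel {F : Type} [Field F] (H : Subgroup Fˣ) (p p' : {p : F × F // p ≠ 0}) : Prop :=
  ∃ h ∈ H, p.1.1 = (h : F) * p'.1.1 ∧ p.1.2 = (h : F) * p'.1.2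

/-- The vertex set of the graph `G(q,t)`: nonzero pairs modulo scaling by `H`. -/
def GVertex (F : Type) [Field F] (H : Subgroup Fˣ) : Type :=
  Quot (Grel H)

/-- Membership of a field element in the subgroup `H ≤ Fˣ`. -/
def memH {F : Type} [Field F] (H : Subgroup Fˣ) (x : F) : Prop :=
  ∃ h ∈ H, (h : F) = x

/-- Adjacency in the graph `G(q,t)`: `⟨a,b⟩` and `⟨x,y⟩` are adjacent iff `a·x + b·y ∈ H`
(this condition is independent of the chosen representatives). -/
def GAdj {F : Type} [Field F] (H : Subgroup Fˣ) (u v : GVertex F H) : Prop :=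
  ∃ p p' : {p : F × F // p ≠ 0},
    u = Quot.mk (Grel H) p ∧ v = Quot.mk (Grel H) p' ∧
      memH H (p.1.1 * p'.1.1 + p.1.2 * p'.1.2)

open Polynomial in
/-- polynomials of degree at most `d` in `x`. -/
noncomputable def polP {F A : Type} [Field F] [CommRing A] [Algebra F A] (d : ℕ) (x : A) :
    Submodule F A := (degreeLT F (d + 1)).map (aeval x).toLinearMap

/-- products with degree at most `j + 1` in `x j`. -/
noncomputable def polW (F : Type) {A : Type} [Field F] [CommRing A] [Algebra F A] (x : ℕ → A) :
    ℕ → Submodule F A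
  | 0 => 1
  | n + 1 => polW F x n * polP (n + 1) (x n)

/-- products with degree at most `j` in `x j`. -/
noncomputable def polV (F : Type) {A : Type} [Field F] [CommRing A] [Algebra F A] (x : ℕ → A) :
    ℕ → Submodule F A
  | 0 => 1
  | n + 1 => polV F x n * polP n (x n)

section aux
open Polynomial
variable {F A : Type} [Field F] [CommRing A] [Algebra F A]

lemma aeval_mem_polP {d : ℕ} {x : A} {p : F[X]} (hp : p.degree < ((d + 1 : ℕ) : WithBot ℕ)) :
    aeval x p ∈ polP (F := F) d x :=
  ⟨p, mem_degreeLT.2 hp, rfl⟩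

lemma polP_mono {d e : ℕ} (h : d ≤ e) (x : A) : polP (F := F) d x ≤ polP e x :=
  Submodule.map_mono (degreeLT_mono (by omega))

lemma polV_le_polW (x : ℕ → A) (n : ℕ) : polV F x n ≤ polW F x n := by
  induction n with
  | zero => exact le_rfl
  | succ n ih => exact mul_le_mul' ih (polP_mono (by omega) _)

lemma polP_mul_sub {d : ℕ} {x y : A} (hy : y ∈ polP (F := F) d x) (c : F) :
    y * (x - algebraMap F A c) ∈ polP (F := F) (d + 1) x := by
  obtain ⟨p, hp, rfl⟩ := hy
  have h : (aeval x).toLinearMap p * (x - algebraMap F A c) = aeval x (p * (X - C c)) := by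
    simp
  rw [h]
  apply aeval_mem_polP
  have hp' := mem_degreeLT.1 hp
  rw [degree_mul, degree_X_sub_C]
  by_cases h0 : p = 0
  · simp [h0]
  · rw [degree_eq_natDegree h0] at hp' ⊢
    norm_cast at hp' ⊢
    omega

lemma polV_mul_prod (x : ℕ → A) (c : ℕ → F) (n : ℕ) :
    ∀ g ∈ polV F x n,
      g * ∏ j ∈ Finset.range n, (x j - algebraMap F A (c j)) ∈ polW F x n := by
  induction n with
  | zero =>
    intro g hg
    rw [Finset.range_zero, Finset.prod_empty, mul_one]
    exact hg
  | succ n ih =>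
    intro g hg
    refine Submodule.mul_induction_on (C := fun g => g * ∏ j ∈ Finset.range (n+1),
      (x j - algebraMap F A (c j)) ∈ polW F x (n+1)) hg ?_ ?_
    · intro u hu y hy
      rw [Finset.prod_range_succ, mul_mul_mul_comm]
      exact Submodule.mul_mem_mul (ih u hu) (polP_mul_sub hy _)
    · intro u w hu hw
      rw [add_mul]
      exact add_mem hu hw

lemma basis_split {ι : Type} [DecidableEq ι] (I : Finset ι) (v : ι → F) (n : ℕ)
    (hI : I.card = n + 2) {k m : ι} (hk : k ∈ I) (hm : m ∈ I.erase k) :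
    ∃ p : F[X], p.degree < ((n + 1 : ℕ) : WithBot ℕ) ∧
      Lagrange.basis I v k = p * (X - C (v m)) := by
  refine ⟨C (v k - v m)⁻¹ * ∏ j ∈ (I.erase k).erase m, Lagrange.basisDivisor (v k) (v j), ?_, ?_⟩
  · have hC : ∀ (c : F) (p : F[X]), (C c * p).degree ≤ p.degree := fun c p => by
      rw [← smul_eq_C_mul]; exact degree_smul_le c p
    refine lt_of_le_of_lt (hC _ _) ?_
    refine lt_of_le_of_lt (degree_prod_le _ _) ?_
    refine lt_of_le_of_lt (Finset.sum_le_card_nsmul _ _ (1 : WithBot ℕ) ?_) ?_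
    · intro j _
      unfold Lagrange.basisDivisor
      refine (hC _ _).trans (degree_X_sub_C_le _)
    · rw [Finset.card_erase_of_mem hm, Finset.card_erase_of_mem hk, hI]
      simp
      norm_cast
      omega
  · rw [Lagrange.basis, ← Finset.mul_prod_erase _ _ hm]
    unfold Lagrange.basisDivisor
    ring

lemma polW_decomp {ι : Type} [DecidableEq ι] (x : ℕ → A) (a : ι → ℕ → F) (n : ℕ) :
    ∀ I : Finset ι, I.card = n + 1 → (∀ j, Set.InjOn (fun i => a i j) I) →
    ∀ w ∈ polW F x n, ∃ g : ι → A, (∀ i, g i ∈ polV F x n) ∧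
      w = ∑ i ∈ I, g i * ∏ j ∈ Finset.range n, (x j - algebraMap F A (a i j)) := by
  induction n with
  | zero =>
    intro I hI _ w hw
    obtain ⟨i, rfl⟩ := Finset.card_eq_one.1 hI
    exact ⟨fun _ => w, fun _ => hw, by simp⟩
  | succ n ih =>
    intro I hI hinj w hw
    have hadd : ∀ u w : A,
      (∃ g : ι → A, (∀ i, g i ∈ polV F x (n+1)) ∧
      u = ∑ i ∈ I, g i * ∏ j ∈ Finset.range (n+1), (x j - algebraMap F A (a i j))) →
      (∃ g : ι → A, (∀ i, g i ∈ polV F x (n+1)) ∧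
      w = ∑ i ∈ I, g i * ∏ j ∈ Finset.range (n+1), (x j - algebraMap F A (a i j))) →
      (∃ g : ι → A, (∀ i, g i ∈ polV F x (n+1)) ∧
      u + w = ∑ i ∈ I, g i * ∏ j ∈ Finset.range (n+1), (x j - algebraMap F A (a i j))) := by
      rintro u w ⟨g, hg, rfl⟩ ⟨g', hg', rfl⟩
      refine ⟨g + g', fun i => add_mem (hg i) (hg' i), ?_⟩
      simp [add_mul, Finset.sum_add_distrib]
    refine Submodule.mul_induction_on hw ?_ hadd
    rintro u hu y ⟨p, hp, rfl⟩
    have hp' := mem_degreeLT.1 hp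
    have hpe := Lagrange.eq_interpolate (hinj n) (f := p) (by rw [hI]; exact hp')
    rw [Lagrange.interpolate_apply] at hpe
    rw [hpe, map_sum, Finset.mul_sum]
    refine Finset.sum_induction _ (fun u => ∃ g : ι → A, (∀ i, g i ∈ polV F x (n+1)) ∧
      u = ∑ i ∈ I, g i * ∏ j ∈ Finset.range (n+1), (x j - algebraMap F A (a i j)))
      hadd ⟨0, fun _ => zero_mem _, by simp⟩ ?_
    intro k hk
    obtain ⟨g, hg, rfl⟩ := ih (I.erase k) (by rw [Finset.card_erase_of_mem hk, hI]; rfl)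
      (fun j => (hinj j).mono (by simp)) u hu
    have hsp : ∀ m, ∃ p : F[X], p.degree < ((n + 1 : ℕ) : WithBot ℕ) ∧
      (m ∈ I.erase k → Lagrange.basis I (fun i => a i n) k = p * (X - C (a m n))) := by
      intro m
      by_cases hm : m ∈ I.erase k
      · obtain ⟨p, h1, h2⟩ := basis_split I (fun i => a i n) n hI hk hm
        exact ⟨p, h1, fun _ => h2⟩
      · exact ⟨0, by simp, fun h => absurd h hm⟩
    choose P hP1 hP2 using hsp
    set e := eval (a k n) p with he
    refine ⟨fun m => if m = k then 0 else e • (g m * aeval (x n) (P m)), ?_, ?_⟩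
    · intro m
      dsimp only
      split_ifs
      · exact zero_mem _
      · exact Submodule.smul_mem _ _ (Submodule.mul_mem_mul (hg m) (aeval_mem_polP (hP1 m)))
    · rw [← Finset.add_sum_erase _ _ hk]
      beta_reduce
      rw [if_pos rfl, zero_mul, zero_add, Finset.sum_mul]
      refine Finset.sum_congr rfl fun m hm => ?_
      rw [if_neg (Finset.ne_of_mem_erase hm), hP2 m hm, Finset.prod_range_succ]
      simp [Algebra.smul_def]
      ring

lemma polP_span (d : ℕ) (x : A) :
    ∃ s : Set A, s.Finite ∧ s.ncard ≤ d + 1 ∧ polP (F := F) d x = Submodule.span F s := by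
  classical
  refine ⟨((Finset.range (d+1)).image fun k => x ^ k : Finset A), Finset.finite_toSet _, ?_, ?_⟩
  · rw [Set.ncard_coe_finset]
    exact Finset.card_image_le.trans (by simp)
  · rw [polP, degreeLT_eq_span_X_pow, Submodule.map_span]
    congr 1
    ext y
    simp

lemma polW_span (x : ℕ → A) (n : ℕ) :
    ∃ s : Set A, s.Finite ∧ s.ncard ≤ (n + 1).factorial ∧ polW F x n = Submodule.span F s := by
  induction n with
  | zero => exact ⟨{1}, Set.finite_singleton _, by simp, by rw [polW, Submodule.one_eq_span]⟩
  | succ n ih =>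
    obtain ⟨s, hs, hc, h⟩ := ih
    obtain ⟨t, ht, hd, h'⟩ := polP_span (F := F) (n+1) (x n)
    open Pointwise in
    refine ⟨s * t, hs.mul ht, ?_, by rw [polW, h, h', Submodule.span_mul_span]⟩
    rw [Nat.factorial_succ (n + 1), mul_comm (n + 1 + 1)]
    refine le_trans ?_ (Nat.mul_le_mul hc hd)
    rw [← Set.image2_mul, ← Set.image_prod, ← Set.ncard_prod]
    exact Set.ncard_image_le (hs.prod ht)

end aux

open Polynomial in
/-- Norm-graph lemma. -/
lemma norm_system {F : Type} [Field F] (S : Set F) (hS : S.Finite) (n : ℕ)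
    (X' : ℕ → F → F) (a : Fin (n + 1) → ℕ → F) (c b : Fin (n + 1) → F)
    (hinj : ∀ j, Function.Injective (fun i => a i j))
    (h : ∀ T ∈ S, ∀ i, (T - c i) * ∏ j ∈ Finset.range n, (X' j T - a i j) = b i) :
    S.ncard ≤ (n + 1).factorial := by
  classical
  have : Fintype S := hS.fintype
  let x : ℕ → (S → F) := fun j T => X' j T
  let t : S → F := fun T => T
  have hcl : ∀ w ∈ polW F x n, t * w ∈ polW F x n := by
    intro w hw
    obtain ⟨g, hg, rfl⟩ := polW_decomp x a n Finset.univ (by simp) (fun j => (hinj j).injOn) w hw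
    rw [Finset.mul_sum]
    refine sum_mem fun i _ => ?_
    have : t * (g i * ∏ j ∈ Finset.range n, (x j - algebraMap F (S → F) (a i j)))
        = b i • g i + c i • (g i * ∏ j ∈ Finset.range n, (x j - algebraMap F (S → F) (a i j))) := by
      ext T
      have := h T T.2 i
      simp only [Pi.mul_apply, Pi.add_apply, Pi.smul_apply, smul_eq_mul, Finset.prod_apply,
        Pi.sub_apply, Pi.algebraMap_apply, Algebra.algebraMap_self, RingHom.id_apply, t, x]
      rw [← this]
      ring
    rw [this]
    exact add_mem (Submodule.smul_mem _ _ (polV_le_polW x n (hg i)))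
      (Submodule.smul_mem _ _ (polV_mul_prod x (a i) n _ (hg i)))
  have h1 : (1 : S → F) ∈ polW F x n := by
    have : ∀ m, (1 : S → F) ∈ polW F x m := by
      intro m
      induction m with
      | zero => exact Submodule.one_le.1 le_rfl
      | succ m ih =>
        have h1 : (1 : S → F) ∈ polP (F := F) (m+1) (x m) := by
          have := aeval_mem_polP (F := F) (d := m+1) (x := x m) (p := 1)
            (by rw [degree_one]; norm_cast; omega)
          simpa using this
        have := Submodule.mul_mem_mul ih h1
        rwa [mul_one] at this
    exact this n
  have hpow : ∀ k : ℕ, t ^ k ∈ polW F x n := by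
    intro k
    induction k with
    | zero => simpa using h1
    | succ k ih => rw [pow_succ']; exact hcl _ ih
  have hpol : ∀ p : F[X], aeval t p ∈ polW F x n := by
    intro p
    rw [aeval_eq_sum_range]
    exact sum_mem fun i _ => Submodule.smul_mem _ _ (hpow i)
  have htop : polW F x n = ⊤ := by
    rw [eq_top_iff]
    intro f _
    have : f = aeval t (Lagrange.interpolate Finset.univ t f) := by
      ext T
      have e1 : aeval t (Lagrange.interpolate Finset.univ t f) T
          = eval (t T) (Lagrange.interpolate Finset.univ t f) := by
        have := (aeval_algHom_apply (Pi.evalAlgHom F (fun _ : S => F) T) t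
          (Lagrange.interpolate Finset.univ t f))
        rw [← Polynomial.coe_aeval_eq_eval]
        exact this.symm
      rw [e1, Lagrange.eval_interpolate_at_node _ (Subtype.val_injective.injOn) (Finset.mem_univ T)]
    rw [this]
    exact hpol _
  obtain ⟨s, hs, hc, he⟩ := polW_span (F := F) x n
  rw [htop] at he
  have : Fintype s := hs.fintype
  have h2 := finrank_span_le_card (R := F) s
  rw [← he, finrank_top, Module.finrank_fintype_fun_eq_card] at h2
  rw [← Nat.card_coe_set_eq, Nat.card_eq_fintype_card]
  rw [← Nat.card_coe_set_eq, Nat.card_eq_fintype_card] at hc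
  rw [Set.toFinset_card] at h2
  omega

lemma Grel_equiv {F : Type} [Field F] (H : Subgroup Fˣ) : Equivalence (Grel H) where
  refl p := ⟨1, one_mem _, by simp⟩
  symm := by
    rintro p p' ⟨h, hh, h1, h2⟩
    exact ⟨h⁻¹, inv_mem hh, by simp [h1], by simp [h2]⟩
  trans := by
    rintro p p' p'' ⟨h, hh, h1, h2⟩ ⟨k, hk, h3, h4⟩
    exact ⟨h * k, mul_mem hh hk, by simp [h1, h3, mul_assoc], by simp [h2, h4, mul_assoc]⟩

lemma Grel_mk {F : Type} [Field F] {H : Subgroup Fˣ} {p p' : {p : F × F // p ≠ 0}} :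
    Quot.mk (Grel H) p = Quot.mk (Grel H) p' ↔ Grel H p p' :=
  ⟨fun h => (Grel_equiv H).eqvGen_iff.1 (Quot.eqvGen_exact h), Quot.sound⟩

lemma GAdj_mk {F : Type} [Field F] {H : Subgroup Fˣ} {p p' : {p : F × F // p ≠ 0}}
    (h : GAdj H (Quot.mk _ p) (Quot.mk _ p')) :
    memH H (p.1.1 * p'.1.1 + p.1.2 * p'.1.2) := by
  obtain ⟨s, s', h1, h2, k, hk, e⟩ := h
  obtain ⟨u, hu, u1, u2⟩ := Grel_mk.1 h1
  obtain ⟨v, hv, v1, v2⟩ := Grel_mk.1 h2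
  refine ⟨u * v * k, mul_mem (mul_mem hu hv) hk, ?_⟩
  rw [u1, u2, v1, v2]
  push_cast
  rw [e]
  ring

lemma memH_iff {F : Type} [Field F] [Fintype F] {H : Subgroup Fˣ} {m : ℕ} (hm : 0 < m)
    (hH : Nat.card H = m) (x : F) : memH H x ↔ x ^ m = 1 := by
  classical
  constructor
  · rintro ⟨h, hh, rfl⟩
    have := pow_card_eq_one' (x := (⟨h, hh⟩ : H))
    rw [hH] at this
    have := congrArg (fun z : H => ((z : Fˣ) : F)) this
    simpa using this
  · intro hx
    have hx0 : x ≠ 0 := by rintro rfl; simp [hm.ne'] at hx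
    refine ⟨Units.mk0 x hx0, ?_, rfl⟩
    have hsub : (Finset.univ.filter fun u : Fˣ => u ∈ H) ⊆
        Finset.univ.filter fun u : Fˣ => u ^ m = 1 := by
      intro u hu
      simp only [Finset.mem_filter, Finset.mem_univ, true_and] at hu ⊢
      have := pow_card_eq_one' (x := (⟨u, hu⟩ : H))
      rw [hH] at this
      exact congrArg (fun z : H => (z : Fˣ)) this
    have hcard : (Finset.univ.filter fun u : Fˣ => u ∈ H).card = m := by
      rw [← hH, Nat.card_eq_fintype_card, Fintype.card_subtype]
    have := Finset.eq_of_subset_of_card_le hsub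
      (by rw [hcard]; exact IsCyclic.card_pow_eq_one_le hm)
    have hmem : Units.mk0 x hx0 ∈ Finset.univ.filter fun u : Fˣ => u ^ m = 1 := by
      simp only [Finset.mem_filter, Finset.mem_univ, true_and]
      ext
      simpa using hx
    rw [← this] at hmem
    simpa using hmem

/-- For an arbitrary prime power `q` and integer `r ≥ 2`, the graph
`G(q^{r−1}, 1+q+⋯+q^{r−2})` is `K_{r,(r−1)!+1}`-free: any `r` pairwise distinct vertices
have at most `(r−1)!` common neighbors. -/
theorem G_Kr_free {q r : ℕ} (hq : IsPrimePow q) (hr : 2 ≤ r)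
    {F : Type} [Field F] [Fintype F] (hF : Fintype.card F = q ^ (r - 1))
    (H : Subgroup Fˣ) (hH : Nat.card H = ∑ j ∈ Finset.range (r - 1), q ^ j)
    (v : Fin r → GVertex F H) (hv : Function.Injective v) :
    {w : GVertex F H | ∀ i : Fin r, GAdj H w (v i)}.ncard ≤ (r - 1).factorial := by
  classical
  obtain ⟨n, rfl⟩ : ∃ n, r = n + 2 := ⟨r - 2, by omega⟩
  simp only [show n + 2 - 1 = n + 1 from rfl] at hF hH ⊢
  have hadd : ∀ (j : ℕ) (x y : F), (x + y) ^ q ^ j = x ^ q ^ j + y ^ q ^ j := by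
    obtain ⟨p, k, hp, hk, rfl⟩ := hq
    have hp' := hp.nat_prime
    have : Fact p.Prime := ⟨hp'⟩
    rw [← pow_mul] at hF
    have : CharP F p := charP_of_card_eq_prime_pow hF
    intro j x y
    rw [← pow_mul]
    exact add_pow_char_pow x y _ _
  have hq0 : q ≠ 0 := hq.ne_zero
  have hpinj : ∀ j : ℕ, Function.Injective (fun x : F => x ^ q ^ j) := by
    intro j x y hxy
    have h1 := hadd j (x - y) y
    simp only at hxy
    rw [sub_add_cancel, hxy] at h1
    have h2 : (x - y) ^ q ^ j = 0 := by simpa using h1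
    exact sub_eq_zero.1 (pow_eq_zero_iff (pow_ne_zero _ hq0) |>.1 h2)
  set m := ∑ j ∈ Finset.range (n + 1), q ^ j with hm
  have hm0 : 0 < m := by rw [hm, Finset.sum_range_succ']; simp
  have hmem := memH_iff hm0 hH
  have hpm : ∀ x : F, x ^ m = x * ∏ j ∈ Finset.range n, x ^ q ^ (j + 1) := by
    intro x
    rw [hm, ← Finset.prod_pow_eq_pow_sum, Finset.prod_range_succ', mul_comm]
    simp
  choose p hp using fun i => Quot.exists_rep (v i)
  -- normalized representatives
  have hrep : ∀ w, (∀ i, GAdj H w (v i)) → ∃ s : {p : F × F // p ≠ 0}, Quot.mk _ s = w ∧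
      s.1.1 * (p 0).1.1 + s.1.2 * (p 0).1.2 = 1 ∧
      ∀ i, (s.1.1 * (p i).1.1 + s.1.2 * (p i).1.2) ^ m = 1 := by
    intro w hw
    obtain ⟨s, rfl⟩ := Quot.exists_rep w
    have hw' : ∀ i, memH H (s.1.1 * (p i).1.1 + s.1.2 * (p i).1.2) := by
      intro i
      apply GAdj_mk
      rw [hp i]
      exact hw i
    obtain ⟨h, hh, e⟩ := hw' 0
    have hne : ((h⁻¹ : Fˣ) : F) ≠ 0 := Units.ne_zero _
    let s' : {p : F × F // p ≠ 0} := ⟨(((h⁻¹ : Fˣ) : F) * s.1.1, ((h⁻¹ : Fˣ) : F) * s.1.2), by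
      intro h0
      apply s.2
      rw [Prod.mk_eq_zero, mul_eq_zero, mul_eq_zero] at h0
      exact Prod.ext (h0.1.resolve_left hne) (h0.2.resolve_left hne)⟩
    have hs' : Quot.mk (Grel H) s' = Quot.mk (Grel H) s :=
      Grel_mk.2 ⟨h⁻¹, inv_mem hh, rfl, rfl⟩
    refine ⟨s', hs', ?_, ?_⟩
    · have : s'.1.1 * (p 0).1.1 + s'.1.2 * (p 0).1.2
        = ((h⁻¹ : Fˣ) : F) * (s.1.1 * (p 0).1.1 + s.1.2 * (p 0).1.2) := by
        simp only [s']; ring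
      rw [this, ← e]
      simp
    · intro i
      rw [← hmem]
      apply GAdj_mk
      rw [hp i, hs']
      exact hw i
  rcases Set.eq_empty_or_nonempty {w : GVertex F H | ∀ i, GAdj H w (v i)} with hE | ⟨w0, hw0⟩
  · rw [hE]; simp
  obtain ⟨s0, -, h01, h0m⟩ := hrep w0 hw0
  set a := (p 0).1.1
  set b := (p 0).1.2
  set x0 := s0.1.1
  set y0 := s0.1.2
  let α : Fin (n+2) → F := fun i => x0 * (p i).1.1 + y0 * (p i).1.2
  let β : Fin (n+2) → F := fun i => (p i).1.2 * a - (p i).1.1 * b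
  have hα : ∀ i, α i ^ m = 1 := h0m
  have hα0 : ∀ i, α i ≠ 0 := by
    intro i h0
    have := hα i
    rw [h0, zero_pow hm0.ne'] at this
    exact zero_ne_one this
  have hpa : ∀ i, (p i).1.1 = a * α i - y0 * β i := by
    intro i; simp only [α, β]; linear_combination (-(p i).1.1) * h01
  have hpb : ∀ i, (p i).1.2 = b * α i + x0 * β i := by
    intro i; simp only [α, β]; linear_combination (-(p i).1.2) * h01
  have hdist : ∀ i j, i ≠ j → α i * β j ≠ α j * β i := by
    intro i j hij hc
    apply hij
    apply hv
    rw [← hp i, ← hp j]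
    refine Grel_mk.2 ?_
    obtain ⟨k, hk, e⟩ := (hmem (α i / α j)).2 (by rw [div_pow, hα, hα, div_one])
    have hj := hα0 j
    have hb : β i = α i / α j * β j := by field_simp; linear_combination -hc
    have ha : α i = α i / α j * α j := by field_simp
    refine ⟨k, hk, ?_, ?_⟩
    · rw [e, hpa i, hpa j]
      linear_combination a * ha - y0 * hb
    · rw [e, hpb i, hpb j]
      linear_combination b * ha + x0 * hb
  have hβ0 : ∀ i, i ≠ 0 → β i ≠ 0 := by
    intro i hi h0
    apply hdist i 0 hi
    rw [h0]
    simp only [β, a, b]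
    ring
  -- the set of parameters
  let S : Set F := {Y | ∀ i : Fin (n+1), (α i.succ + β i.succ * Y) ^ m = 1}
  have hS : S.ncard ≤ (n+1).factorial := by
    refine norm_system S (Set.toFinite _) n (fun j T => T ^ q ^ (j+1))
      (fun i j => (-(α i.succ / β i.succ)) ^ q ^ (j+1)) (fun i => -(α i.succ / β i.succ))
      (fun i => ((β i.succ) ^ m)⁻¹) ?_ ?_
    · intro j i i' hii
      have h1 := neg_injective (hpinj (j+1) hii)
      by_contra hne
      refine hdist i.succ i'.succ (fun h => hne (Fin.succ_injective _ h)) ?_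
      rwa [div_eq_div_iff (hβ0 _ (Fin.succ_ne_zero _)) (hβ0 _ (Fin.succ_ne_zero _))] at h1
    · intro T hT i
      have hb := hβ0 _ (Fin.succ_ne_zero i)
      have h1 := hT i
      have h2 : α i.succ + β i.succ * T = β i.succ * (T - -(α i.succ / β i.succ)) := by
        field_simp; ring
      rw [h2, mul_pow] at h1
      rw [eq_comm, inv_eq_of_mul_eq_one_right h1, hpm]
      congr 1
      refine Finset.prod_congr rfl fun j _ => ?_
      rw [eq_sub_iff_add_eq, ← hadd, sub_add_cancel]
  have hY : ∀ w, ∃ Y : F, (∀ i, GAdj H w (v i)) → Y ∈ S ∧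
      ∃ s : {p : F × F // p ≠ 0}, Quot.mk _ s = w ∧ s.1 = (x0 - b * Y, y0 + a * Y) := by
    intro w
    by_cases hw : ∀ i, GAdj H w (v i)
    · obtain ⟨s, hs, hs1, hsm⟩ := hrep w hw
      refine ⟨x0 * s.1.2 - y0 * s.1.1, fun _ => ?_⟩
      have e1 : s.1.1 = x0 - b * (x0 * s.1.2 - y0 * s.1.1) := by
        linear_combination x0 * hs1 - s.1.1 * h01
      have e2 : s.1.2 = y0 + a * (x0 * s.1.2 - y0 * s.1.1) := by
        linear_combination y0 * hs1 - s.1.2 * h01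
      refine ⟨fun i => ?_, s, hs, Prod.ext e1 e2⟩
      rw [← hsm i.succ]
      congr 1
      simp only [α, β]
      linear_combination -(p i.succ).1.1 * e1 - (p i.succ).1.2 * e2
    · exact ⟨0, fun h => absurd h hw⟩
  choose f hf using hY
  refine le_trans (Set.ncard_le_ncard_of_injOn f (fun w hw => (hf w hw).1) ?_ (Set.toFinite S)) hS
  intro w hw w' hw' he
  obtain ⟨-, s, hs, es⟩ := hf w hw
  obtain ⟨-, s', hs', es'⟩ := hf w' hw'
  rw [← hs, ← hs']
  congr 1
  apply Subtype.ext
  rw [es, es', he]
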